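/- Let K be a field, P ∈ K[x]^{m×n}, B ∈ K[x]^{k×m}, s ∈ ℤ^n, and t = rdeg_s(P) ∈ ℤ^m. Then: (i) if P is in s-reduced form and B is in t-reduced form, then BP is in s-reduced form; (ii) if P is in s-weak Popov form and B is in t-weak Popov form, then BP is in s-weak Popov form. -/

import Mathlib

open Polynomial Matrix

/-- The degree of a polynomial, viewed in `ℤ ∪ {-∞}`. -/
noncomputable def degZ {K : Type*} [Field K] (p : K[X]) : WithBot ℤ :=
  p.degree.map fun a : ℕ => (a : ℤ)

/-- The `s`-row degree of a (row) vector of polynomials. -/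
noncomputable def rdegRow {K : Type*} [Field K] {ν : Type*} [Fintype ν]
    (s : ν → ℤ) (v : ν → K[X]) : WithBot ℤ :=
  Finset.univ.sup fun j => degZ (v j) + (s j : WithBot ℤ)

/-- The `s`-row degree of a polynomial matrix. -/
noncomputable def rdeg {K : Type*} [Field K] {ι ν : Type*} [Fintype ν]
    (s : ν → ℤ) (P : Matrix ι ν K[X]) : ι → WithBot ℤ :=
  fun i => rdegRow s (P i)

/-- The `t`-column degree of a polynomial matrix. -/
noncomputable def cdeg {K : Type*} [Field K] {ι ν : Type*} [Fintype ι]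
    (t : ι → ℤ) (P : Matrix ι ν K[X]) : ν → WithBot ℤ :=
  fun j => Finset.univ.sup fun i => degZ (P i j) + (t i : WithBot ℤ)

/-- Coefficient of integer degree `d` of a polynomial (0 if `d < 0`). -/
noncomputable def coeffZ {K : Type*} [Field K] (p : K[X]) (d : ℤ) : K :=
  if 0 ≤ d then p.coeff d.toNat else 0

/-- The `s`-leading matrix of a polynomial matrix. -/
noncomputable def lm {K : Type*} [Field K] {ι ν : Type*} [Fintype ν]
    (s : ν → ℤ) (P : Matrix ι ν K[X]) : Matrix ι ν K :=
  Matrix.of fun i j =>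
    (rdeg s P i).recBotCoe 0 fun t => coeffZ (P i j) (t - s j)

/-- `P` is in `s`-reduced form: its `s`-leading matrix has full row rank,
i.e. its rows are linearly independent over `K`. -/
def IsReducedForm {K : Type*} [Field K] {ι ν : Type*} [Fintype ν]
    (s : ν → ℤ) (P : Matrix ι ν K[X]) : Prop :=
  LinearIndependent K fun i => lm s P i

open Classical in
/-- The `s`-pivot index of a row vector: the largest column index where the
`s`-row degree is attained (with a nonzero entry); `⊥` for the zero row. -/
noncomputable def piv {K : Type*} [Field K] {ν : Type*} [Fintype ν] [LinearOrder ν]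
    (s : ν → ℤ) (v : ν → K[X]) : WithBot ν :=
  (Finset.univ.filter fun j => v j ≠ 0 ∧ degZ (v j) + (s j : WithBot ℤ) = rdegRow s v).max

/-- The `s`-pivot degree of a row vector (junk value `0` for the zero row). -/
noncomputable def pivDeg {K : Type*} [Field K] {ν : Type*} [Fintype ν] [LinearOrder ν]
    (s : ν → ℤ) (v : ν → K[X]) : ℕ :=
  ((piv s v).map fun j => (v j).natDegree).unbotD 0

/-- `P` is in `s`-weak Popov form: no zero row and strictly increasing `s`-pivot indices. -/
def IsWeakPopov {K : Type*} [Field K] {ι ν : Type*} [Fintype ν] [LinearOrder ν] [Preorder ι]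
    (s : ν → ℤ) (P : Matrix ι ν K[X]) : Prop :=
  (∀ i, piv s (P i) ≠ ⊥) ∧ StrictMono fun i => piv s (P i)

/-- `P` is in `s`-unordered weak Popov form: no zero row and pairwise distinct
`s`-pivot indices. -/
def IsUWeakPopov {K : Type*} [Field K] {ι ν : Type*} [Fintype ν] [LinearOrder ν]
    (s : ν → ℤ) (P : Matrix ι ν K[X]) : Prop :=
  (∀ i, piv s (P i) ≠ ⊥) ∧ Function.Injective fun i => piv s (P i)

/-- `P` is in `s`-Popov form: `s`-weak Popov, monic pivots, and each pivot entry
has degree strictly larger than the other entries of its column. -/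
def IsPopov {K : Type*} [Field K] {ι ν : Type*} [Fintype ν] [LinearOrder ν] [Preorder ι]
    (s : ν → ℤ) (P : Matrix ι ν K[X]) : Prop :=
  IsWeakPopov s P ∧
    ∀ i (j : ν), piv s (P i) = (j : WithBot ν) →
      (P i j).Monic ∧ ∀ i', i' ≠ i → (P i' j).degree < (P i j).degree

/-- The row space of a polynomial matrix. -/
noncomputable def rowSpace {K : Type*} [Field K] {ι ν : Type*} (P : Matrix ι ν K[X]) :
    Submodule K[X] (ν → K[X]) :=
  Submodule.span K[X] (Set.range fun i => P i)

/-- The rows of `B` form a basis of the module `M`. -/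
def IsBasisOf {K : Type*} [Field K] {ι ν : Type*} (B : Matrix ι ν K[X])
    (M : Submodule K[X] (ν → K[X])) : Prop :=
  LinearIndependent K[X] (fun i => B i) ∧
    Submodule.span K[X] (Set.range fun i => B i) = M

/-- The left kernel of a polynomial matrix. -/
noncomputable def leftKernel {K : Type*} [Field K] {ι ν : Type*} [Fintype ι]
    (F : Matrix ι ν K[X]) : Submodule K[X] (ι → K[X]) :=
  LinearMap.ker F.vecMulLinear

/-!
If the rows of `P` have `s`-degrees `t`, then a row `v` of `t`-degree at most `d` has a product
`v ᵥ* P` of `s`-degree at most `d`, and the coefficients in degree `d` multiply: the degree-`d` row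
of `v ᵥ* P` is the degree-`d` row of `v` times `lm s P`. If `lm s P` has independent rows, this
product does not vanish, so degrees are exact (the predictable degree property) and
`lm s (B * P) = lm t B * lm s P`. In the weak Popov case the pivot of a row is the position of the
last nonzero entry of its leading row, and `lm s P` is in echelon form, so multiplication by it
carries a last nonzero position `b` to the pivot index of row `b` of `P`.
-/

section LastNonzero

variable {R κ ν : Type*}

/-- `j` is the position of the last nonzero entry of `w`. Applied to the leading coefficients of a
polynomial row, this is its pivot index. -/
def IsLastNonzero [Zero R] [LT ν] (w : ν → R) (j : ν) : Prop :=
  w j ≠ 0 ∧ ∀ j', j < j' → w j' = 0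

lemma IsLastNonzero.vecMul [NonUnitalNonAssocSemiring R] [NoZeroDivisors R] [Fintype κ]
    [LinearOrder κ] [Preorder ν] {w : κ → R} {b : κ} {M : Matrix κ ν R} {π : κ → ν}
    (hw : IsLastNonzero w b) (hM : ∀ l, IsLastNonzero (M l) (π l)) (hπ : StrictMono π) :
    IsLastNonzero (w ᵥ* M) (π b) := by
  constructor
  · have h_term : ∀ l, l ≠ b → w l * M l (π b) = 0 := fun l hl => by
      rcases lt_or_gt_of_ne hl with hlb | hbl
      · rw [(hM l).2 _ (hπ hlb), mul_zero]
      · rw [hw.2 l hbl, zero_mul]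
    rw [Matrix.vecMul, dotProduct, Fintype.sum_eq_single b h_term]
    exact mul_ne_zero hw.1 (hM b).1
  · intro j hj
    rw [Matrix.vecMul, dotProduct]
    refine Finset.sum_eq_zero fun l _ => ?_
    rcases le_or_gt l b with hlb | hbl
    · rw [(hM l).2 j ((hπ.monotone hlb).trans_lt hj), mul_zero]
    · rw [hw.2 l hbl, zero_mul]

end LastNonzero

lemma withBot_add_coe_le_coe_iff {G : Type*} [AddGroup G] [LE G] [AddRightMono G]
    {x : WithBot G} {a c : G} : x + (c : WithBot G) ≤ a ↔ x ≤ ((a - c : G) : WithBot G) := by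
  induction x with
  | bot => simp
  | coe x => rw [← WithBot.coe_add, WithBot.coe_le_coe, WithBot.coe_le_coe, le_sub_iff_add_le]

lemma withBot_add_coe_eq_coe_iff {G : Type*} [AddGroup G] {x : WithBot G} {a c : G} :
    x + (c : WithBot G) = a ↔ x = ((a - c : G) : WithBot G) := by
  induction x with
  | bot => simp
  | coe x => rw [← WithBot.coe_add, WithBot.coe_inj, WithBot.coe_inj, eq_sub_iff_add_eq]

section Degree

variable {K : Type*} [Field K] {p q : K[X]} {a b d : ℤ}

@[simp]
lemma degZ_zero : degZ (0 : K[X]) = ⊥ := by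
  simp [degZ]

@[simp]
lemma degZ_eq_bot_iff : degZ p = ⊥ ↔ p = 0 := by
  simp [degZ]

lemma degZ_eq_natDegree (hp : p ≠ 0) : degZ p = ((p.natDegree : ℤ) : WithBot ℤ) := by
  rw [degZ, degree_eq_natDegree hp]
  rfl

@[simp]
lemma degZ_mul (p q : K[X]) : degZ (p * q) = degZ p + degZ q := by
  rw [degZ, degree_mul]
  exact WithBot.map_add (Nat.castAddMonoidHom ℤ) p.degree q.degree

@[simp]
lemma coeffZ_zero (d : ℤ) : coeffZ (0 : K[X]) d = 0 := by
  simp [coeffZ]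

@[simp]
lemma coeffZ_natCast (p : K[X]) (n : ℕ) : coeffZ p n = p.coeff n := by
  simp [coeffZ]

lemma coeffZ_sum {ι : Type*} (u : Finset ι) (f : ι → K[X]) (d : ℤ) :
    coeffZ (∑ i ∈ u, f i) d = ∑ i ∈ u, coeffZ (f i) d := by
  unfold coeffZ
  split_ifs
  · exact finsetSum_coeff _ _ _
  · exact Finset.sum_const_zero.symm

lemma degZ_le_coe_iff : degZ p ≤ d ↔ ∀ e, d < e → coeffZ p e = 0 := by
  rcases eq_or_ne p 0 with rfl | hp
  · simp
  rw [degZ_eq_natDegree hp, WithBot.coe_le_coe]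
  refine ⟨fun h e he => ?_, fun h => ?_⟩
  · lift e to ℕ using by lia
    rw [coeffZ_natCast]
    exact coeff_eq_zero_of_natDegree_lt (by lia)
  · by_contra! hlt
    exact hp (by simpa using h _ hlt)

lemma degZ_eq_coe_iff : degZ p = d ↔ degZ p ≤ d ∧ coeffZ p d ≠ 0 := by
  rcases eq_or_ne p 0 with rfl | hp
  · simp
  rw [degZ_eq_natDegree hp, WithBot.coe_inj, WithBot.coe_le_coe]
  refine ⟨?_, fun ⟨hle, hne⟩ => hle.antisymm ?_⟩
  · rintro rfl
    simpa using hp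
  · by_contra! hlt
    exact hne (degZ_le_coe_iff.1 (degZ_eq_natDegree hp).le d hlt)

lemma degZ_sum_le {ι : Type*} {u : Finset ι} {f : ι → K[X]} (h : ∀ i ∈ u, degZ (f i) ≤ d) :
    degZ (∑ i ∈ u, f i) ≤ d :=
  degZ_le_coe_iff.2 fun e he => by
    rw [coeffZ_sum]
    exact Finset.sum_eq_zero fun i hi => degZ_le_coe_iff.1 (h i hi) e he

lemma coeffZ_mul (hp : degZ p ≤ a) (hq : degZ q ≤ b) :
    coeffZ (p * q) (a + b) = coeffZ p a * coeffZ q b := by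
  rcases eq_or_ne p 0 with rfl | hp₀
  · simp
  rcases eq_or_ne q 0 with rfl | hq₀
  · simp
  rw [degZ_eq_natDegree hp₀, WithBot.coe_le_coe] at hp
  rw [degZ_eq_natDegree hq₀, WithBot.coe_le_coe] at hq
  lift a to ℕ using by lia
  lift b to ℕ using by lia
  rw [← Nat.cast_add, coeffZ_natCast, coeffZ_natCast, coeffZ_natCast]
  exact coeff_mul_add_eq_of_natDegree_le (by lia) (by lia)

end Degree

section Row

variable {K : Type*} [Field K] {κ ν : Type*} {s : ν → ℤ} {t : κ → ℤ} {v : ν → K[X]} {d : ℤ}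

/-- The row of coefficients of `v` in `s`-degree `d`: column `j` contributes the coefficient of
degree `d - s j`. For `d = rdegRow s v` this is the corresponding row of the leading matrix. -/
noncomputable def rowCoeff (s : ν → ℤ) (v : ν → K[X]) (d : ℤ) : ν → K :=
  fun j => coeffZ (v j) (d - s j)

variable [Fintype ν]

lemma rdegRow_le_coe_iff :
    rdegRow s v ≤ d ↔ ∀ j, degZ (v j) ≤ ((d - s j : ℤ) : WithBot ℤ) := by
  simp [rdegRow, withBot_add_coe_le_coe_iff]

lemma degZ_add_le_rdegRow (s : ν → ℤ) (v : ν → K[X]) (j : ν) :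
    degZ (v j) + (s j : WithBot ℤ) ≤ rdegRow s v :=
  Finset.le_sup (f := fun j => degZ (v j) + (s j : WithBot ℤ)) (Finset.mem_univ j)

@[simp]
lemma rdegRow_eq_bot_iff : rdegRow s v = ⊥ ↔ v = 0 := by
  simp [rdegRow, funext_iff]

lemma degZ_add_eq_coe_iff (h : rdegRow s v ≤ d) (j : ν) :
    degZ (v j) + (s j : WithBot ℤ) = d ↔ rowCoeff s v d j ≠ 0 := by
  rw [withBot_add_coe_eq_coe_iff, degZ_eq_coe_iff]
  exact and_iff_right (rdegRow_le_coe_iff.1 h j)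

lemma rdegRow_eq_coe_iff : rdegRow s v = d ↔ rdegRow s v ≤ d ∧ rowCoeff s v d ≠ 0 := by
  refine ⟨fun h => ⟨h.le, ?_⟩, fun ⟨hle, hne⟩ => hle.antisymm ?_⟩
  · have hv : v ≠ 0 := fun hv => by simp [rdegRow_eq_bot_iff.2 hv] at h
    obtain ⟨i, -⟩ := Function.ne_iff.1 hv
    obtain ⟨j, -, hj⟩ := Finset.exists_mem_eq_sup Finset.univ ⟨i, Finset.mem_univ i⟩
      fun j => degZ (v j) + (s j : WithBot ℤ)
    exact Function.ne_iff.2 ⟨j, (degZ_add_eq_coe_iff h.le j).1 (hj.symm.trans h)⟩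
  · obtain ⟨j, hj⟩ := Function.ne_iff.1 hne
    rw [← (degZ_add_eq_coe_iff hle j).2 hj]
    exact degZ_add_le_rdegRow s v j

variable [Fintype κ] {w : κ → K[X]} {P : Matrix κ ν K[X]}

lemma rdegRow_vecMul_le (hP : ∀ l, rdegRow s (P l) ≤ t l) (hw : rdegRow t w ≤ d) :
    rdegRow s (w ᵥ* P) ≤ d := by
  refine rdegRow_le_coe_iff.2 fun j => degZ_sum_le fun l _ => ?_
  calc degZ (w l * P l j)
      = degZ (w l) + degZ (P l j) := degZ_mul _ _
    _ ≤ ((d - t l : ℤ) : WithBot ℤ) + ((t l - s j : ℤ) : WithBot ℤ) :=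
        add_le_add (rdegRow_le_coe_iff.1 hw l) (rdegRow_le_coe_iff.1 (hP l) j)
    _ = ((d - s j : ℤ) : WithBot ℤ) := by rw [← WithBot.coe_add, sub_add_sub_cancel]

lemma rowCoeff_vecMul (hP : ∀ l, rdegRow s (P l) ≤ t l) (hw : rdegRow t w ≤ d) :
    rowCoeff s (w ᵥ* P) d = rowCoeff t w d ᵥ* of fun l => rowCoeff s (P l) (t l) := by
  ext j
  calc coeffZ (∑ l, w l * P l j) (d - s j)
      = ∑ l, coeffZ (w l * P l j) ((d - t l) + (t l - s j)) := by
        simp only [coeffZ_sum, sub_add_sub_cancel]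
    _ = ∑ l, coeffZ (w l) (d - t l) * coeffZ (P l j) (t l - s j) :=
        Finset.sum_congr rfl fun l _ =>
          coeffZ_mul (rdegRow_le_coe_iff.1 hw l) (rdegRow_le_coe_iff.1 (hP l) j)

end Row

section LeadingMatrix

variable {K : Type*} [Field K] {ι κ ν : Type*} [Fintype κ] [Fintype ν] {s : ν → ℤ} {t : κ → ℤ}
  {P : Matrix κ ν K[X]}

lemma lm_row_eq_rowCoeff {A : Matrix ι ν K[X]} {i : ι} {d : ℤ} (h : rdeg s A i = d) :
    lm s A i = rowCoeff s (A i) d := by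
  ext j
  simp [lm, h, rowCoeff]

lemma lm_row_eq_zero {A : Matrix ι ν K[X]} {i : ι} (h : rdeg s A i = ⊥) : lm s A i = 0 := by
  ext j
  simp [lm, h]

lemma rowCoeff_vecMul_eq_vecMul_lm (ht : ∀ l, rdeg s P l = t l) {w : κ → K[X]} {d : ℤ}
    (hw : rdegRow t w ≤ d) : rowCoeff s (w ᵥ* P) d = rowCoeff t w d ᵥ* lm s P := by
  rw [rowCoeff_vecMul (fun l => (ht l).le) hw]
  congr 1
  exact funext fun l => (lm_row_eq_rowCoeff (ht l)).symm

lemma IsReducedForm.rdegRow_vecMul (hP : IsReducedForm s P) (ht : ∀ l, rdeg s P l = t l)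
    (w : κ → K[X]) : rdegRow s (w ᵥ* P) = rdegRow t w := by
  cases h : rdegRow t w with
  | bot => simp [rdegRow_eq_bot_iff.1 h]
  | coe d =>
    obtain ⟨hle, hne⟩ := rdegRow_eq_coe_iff.1 h
    refine rdegRow_eq_coe_iff.2 ⟨rdegRow_vecMul_le (fun l => (ht l).le) hle, ?_⟩
    rw [rowCoeff_vecMul_eq_vecMul_lm ht hle]
    exact fun h₀ => hne (vecMul_injective_iff.2 hP (h₀.trans (zero_vecMul _).symm))

lemma IsReducedForm.lm_mul (hP : IsReducedForm s P) (ht : ∀ l, rdeg s P l = t l)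
    (B : Matrix ι κ K[X]) : lm s (B * P) = lm t B * lm s P := by
  funext i
  have hdeg : rdeg s (B * P) i = rdeg t B i := hP.rdegRow_vecMul ht (B i)
  rw [mul_apply_eq_vecMul]
  cases h : rdeg t B i with
  | bot => rw [lm_row_eq_zero h, lm_row_eq_zero (hdeg.trans h), zero_vecMul]
  | coe d =>
    rw [lm_row_eq_rowCoeff h, lm_row_eq_rowCoeff (hdeg.trans h), mul_apply_eq_vecMul]
    exact rowCoeff_vecMul_eq_vecMul_lm ht h.le

theorem IsReducedForm.mul {B : Matrix ι κ K[X]} (hB : IsReducedForm t B)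
    (hP : IsReducedForm s P) (ht : ∀ l, rdeg s P l = t l) : IsReducedForm s (B * P) := by
  rw [IsReducedForm, hP.lm_mul ht B]
  exact LinearIndependent.map' hB (lm s P).vecMulLinear
    (LinearMap.ker_eq_bot.2 (vecMul_injective_iff.2 hP))

end LeadingMatrix

section Pivot

variable {K : Type*} [Field K] {ι κ ν : Type*} [Preorder ι] [Fintype κ] [LinearOrder κ]
  [Fintype ν] [LinearOrder ν] {s : ν → ℤ} {t : κ → ℤ} {P : Matrix κ ν K[X]} {B : Matrix ι κ K[X]}

@[simp]
lemma piv_zero (s : ν → ℤ) : piv s (0 : ν → K[X]) = ⊥ := by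
  simp [piv]

lemma piv_eq_coe_iff {v : ν → K[X]} {d : ℤ} (h : rdegRow s v = d) {j : ν} :
    piv s v = j ↔ IsLastNonzero (rowCoeff s v d) j := by
  classical
  have hpiv : piv s v = (Finset.univ.filter fun j => rowCoeff s v d j ≠ 0).max := by
    unfold piv
    congr 1
    ext j
    have h_ne : rowCoeff s v d j ≠ 0 → v j ≠ 0 := fun hj hv => hj (by simp [rowCoeff, hv])
    simpa [h, degZ_add_eq_coe_iff h.le] using h_ne
  rw [hpiv]
  refine ⟨fun hmax => ⟨?_, fun j' hj' => ?_⟩, fun ⟨hj, hlast⟩ => ?_⟩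
  · simpa using Finset.mem_of_max hmax
  · simpa using Finset.notMem_of_max_lt hj' hmax
  · refine le_antisymm (Finset.max_le fun j' hj' => ?_) (Finset.le_max (by simpa using hj))
    exact WithBot.coe_le_coe.2 (not_lt.1 fun hlt => (Finset.mem_filter.1 hj').2 (hlast j' hlt))

lemma exists_rdegRow_eq_coe_of_piv_eq_coe {v : ν → K[X]} {j : ν} (h : piv s v = j) :
    ∃ d : ℤ, rdegRow s v = d := by
  have hv : v ≠ 0 := fun hv => by simp [hv] at h
  obtain ⟨d, hd⟩ := WithBot.ne_bot_iff_exists.1 (rdegRow_eq_bot_iff (s := s).not.2 hv)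
  exact ⟨d, hd.symm⟩

lemma piv_vecMul {π : κ → ν} (hπ : StrictMono π) (hP : ∀ l, piv s (P l) = π l)
    (ht : ∀ l, rdeg s P l = t l) {w : κ → K[X]} {b : κ} (hw : piv t w = b) :
    piv s (w ᵥ* P) = π b := by
  obtain ⟨d, hd⟩ := exists_rdegRow_eq_coe_of_piv_eq_coe hw
  have h_echelon (l : κ) : IsLastNonzero (lm s P l) (π l) := by
    rw [lm_row_eq_rowCoeff (ht l)]
    exact (piv_eq_coe_iff (ht l)).1 (hP l)
  have h_last : IsLastNonzero (rowCoeff s (w ᵥ* P) d) (π b) := by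
    rw [rowCoeff_vecMul_eq_vecMul_lm ht hd.le]
    exact ((piv_eq_coe_iff hd).1 hw).vecMul h_echelon hπ
  have h_deg : rdegRow s (w ᵥ* P) = d :=
    rdegRow_eq_coe_iff.2 ⟨rdegRow_vecMul_le (fun l => (ht l).le) hd.le,
      Function.ne_iff.2 ⟨π b, h_last.1⟩⟩
  exact (piv_eq_coe_iff h_deg).2 h_last

lemma isWeakPopov_iff {A : Matrix ι ν K[X]} :
    IsWeakPopov s A ↔ ∃ π : ι → ν, StrictMono π ∧ ∀ i, piv s (A i) = π i := by
  constructor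
  · rintro ⟨h_ne, h_mono⟩
    choose π hπ using fun i => WithBot.ne_bot_iff_exists.1 (h_ne i)
    simp only [← hπ] at h_mono
    exact ⟨π, fun i j hij => WithBot.coe_lt_coe.1 (h_mono hij), fun i => (hπ i).symm⟩
  · rintro ⟨π, h_mono, hπ⟩
    simp only [IsWeakPopov, hπ]
    exact ⟨fun i => WithBot.coe_ne_bot, fun i j hij => WithBot.coe_lt_coe.2 (h_mono hij)⟩

theorem IsWeakPopov.mul (hB : IsWeakPopov t B) (hP : IsWeakPopov s P)
    (ht : ∀ l, rdeg s P l = t l) : IsWeakPopov s (B * P) := by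
  obtain ⟨β, hβ, hβB⟩ := isWeakPopov_iff.1 hB
  obtain ⟨π, hπ, hπP⟩ := isWeakPopov_iff.1 hP
  exact isWeakPopov_iff.2 ⟨π ∘ β, hπ.comp hβ, fun i => piv_vecMul hπ hπP ht (hβB i)⟩

end Pivot

theorem product_of_reduced_general {K ι κ ν : Type*} [Field K] [Preorder ι]
    [Fintype κ] [LinearOrder κ] [Fintype ν] [LinearOrder ν]
    (P : Matrix κ ν K[X]) (B : Matrix ι κ K[X]) (s : ν → ℤ) (t : κ → ℤ)
    (ht : ∀ l, rdeg s P l = ((t l : ℤ) : WithBot ℤ)) :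
    (IsReducedForm s P → IsReducedForm t B → IsReducedForm s (B * P)) ∧
    (IsWeakPopov s P → IsWeakPopov t B → IsWeakPopov s (B * P)) :=
  ⟨fun hP hB => hB.mul hP ht, fun hP hB => hB.mul hP ht⟩

/-- Lemma 2.5: with `t = rdeg_s(P)`, products of
`s`-reduced (resp. `s`-weak Popov) and `t`-reduced (resp. `t`-weak Popov)
matrices are `s`-reduced (resp. in `s`-weak Popov form). -/
theorem product_of_reduced {K : Type*} [Field K] {k m n : ℕ}
    (P : Matrix (Fin m) (Fin n) K[X]) (B : Matrix (Fin k) (Fin m) K[X])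
    (s : Fin n → ℤ) (t : Fin m → ℤ)
    (ht : ∀ i, rdeg s P i = ((t i : ℤ) : WithBot ℤ)) :
    (IsReducedForm s P → IsReducedForm t B → IsReducedForm s (B * P)) ∧
    (IsWeakPopov s P → IsWeakPopov t B → IsWeakPopov s (B * P)) :=
  product_of_reduced_general P B s t ht
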